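/- arXiv:2303.07664 — 2 statements merged into one kernel-verified Lean document; each statement's English description precedes it below -/
import Mathlib

section
/- The central-binomial sum ∑_{k≥0} C(2k,k)/(16^k·(2k+1)²) equals Cl₂(π/3) = ∑_{n≥1} sin(nπ/3)/n², where C(2k,k) denotes the central binomial coefficient. -/
/-!
Put `F(x) = ∑ C(2k,k) / 4^k · x^(2k+1) / (2k+1)²`, so that the sum in question is `2 F(1/2)`.
Differentiating twice, through the binomial series of `(1 - x²)^(-1/2)`, gives `x F'(x) = arcsin x`,
hence `d/dt F(sin t) = t cot t`. On the other hand the dilogarithm satisfies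
`z Li₂'(z) = -log (1 - z)`, and along the path `z = 1 - exp(-2it)` the logarithm is simply `-2it`,
so `d/dt Li₂(1 - exp(-2it)) = 2t + 2i t cot t`. Therefore
`Li₂(1 - exp(-2it)) = t² + 2i F(sin t)` as long as the path stays in the closed unit disc, that is
for `0 ≤ t ≤ π/6`. At the endpoint `sin (π/6) = 1/2` and `1 - exp(-iπ/3) = exp(iπ/3)`, and the
imaginary part of `Li₂(exp(iθ))` is `Cl₂(θ)`.
-/

open Real

theorem hasDerivAt_tsum_mul_pow_succ {𝕜 : Type*} [RCLike 𝕜] {a : ℕ → 𝕜} {e : ℕ → ℕ} {C : ℝ}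
    (ha : ∀ k, ‖((e k : 𝕜) + 1) * a k‖ ≤ C) (he : ∀ k, k ≤ e k) {z : 𝕜} (hz : ‖z‖ < 1) :
    HasDerivAt (fun w => ∑' k, a k * w ^ (e k + 1))
      (∑' k, ((e k : 𝕜) + 1) * a k * z ^ e k) z := by
  obtain ⟨r, hzr, hr1⟩ := exists_between hz
  have hr0 : 0 ≤ r := (norm_nonneg z).trans hzr.le
  have hC : 0 ≤ C := (norm_nonneg _).trans (ha 0)
  refine hasDerivAt_tsum_of_isPreconnected (t := Metric.ball 0 r) (y₀ := 0)
    (g := fun k w => a k * w ^ (e k + 1)) (g' := fun k w => ((e k : 𝕜) + 1) * a k * w ^ e k)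
    ((summable_geometric_of_lt_one hr0 hr1).mul_left C) Metric.isOpen_ball
    (convex_ball (0 : 𝕜) r).isPreconnected (fun k w _ => ?_) (fun k w hw => ?_)
    (Metric.mem_ball_self ((norm_nonneg z).trans_lt hzr)) ?_ (mem_ball_zero_iff.2 hzr)
  · convert! (hasDerivAt_pow (e k + 1) w).const_mul (a k) using 1
    push_cast [Nat.add_sub_cancel]
    ring
  · have hwr : ‖w‖ ≤ r := (mem_ball_zero_iff.1 hw).le
    calc ‖((e k : 𝕜) + 1) * a k * w ^ e k‖ ≤ C * r ^ e k := by
          rw [norm_mul, norm_pow]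
          gcongr
          exact ha k
      _ ≤ C * r ^ k := mul_le_mul_of_nonneg_left (pow_le_pow_of_le_one hr0 hr1.le (he k)) hC
  · simp

theorem eq_of_hasDerivAt_eq_Ioo {E : Type*} [NormedAddCommGroup E] [NormedSpace ℝ E]
    [CompleteSpace E] {f g f' : ℝ → E} {a b : ℝ} (hab : a ≤ b)
    (hfc : ContinuousOn f (Set.Icc a b)) (hgc : ContinuousOn g (Set.Icc a b))
    (hf : ∀ t ∈ Set.Ioo a b, HasDerivAt f (f' t) t)
    (hg : ∀ t ∈ Set.Ioo a b, HasDerivAt g (f' t) t) (ha : f a = g a) : f b = g b := by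
  have hsub : ∀ t ∈ Set.Ioo a b, HasDerivAt (f - g) 0 t := fun t ht => by
    simpa using (hf t ht).sub (hg t ht)
  have h := intervalIntegral.integral_eq_sub_of_hasDerivAt_of_le hab (hfc.sub hgc) hsub (by simp)
  simpa [ha, eq_comm, sub_eq_zero] using h

/-- The normalised central binomial coefficient `C(2k,k) / 4^k`, the coefficient of `x^k` in the
binomial series of `(1 - x)^(-1/2)`. -/
noncomputable def centralBinomRatio (k : ℕ) : ℝ := k.centralBinom / 4 ^ k

theorem centralBinomRatio_nonneg (k : ℕ) : 0 ≤ centralBinomRatio k := by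
  unfold centralBinomRatio
  positivity

theorem centralBinomRatio_le_one (k : ℕ) : centralBinomRatio k ≤ 1 := by
  unfold centralBinomRatio
  rw [div_le_one (by positivity)]
  exact_mod_cast Nat.centralBinom_le_four_pow k

theorem succ_mul_centralBinomRatio_succ (k : ℕ) :
    ((k : ℝ) + 1) * centralBinomRatio (k + 1) = (k + 1 / 2) * centralBinomRatio k := by
  have h : ((k : ℝ) + 1) * (k + 1).centralBinom = 2 * (2 * k + 1) * k.centralBinom := by
    exact_mod_cast Nat.succ_mul_centralBinom_succ k
  rw [centralBinomRatio, ← mul_div_assoc, h, centralBinomRatio, pow_succ]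
  field_simp
  ring

theorem ascPochhammer_eval_half (k : ℕ) :
    (ascPochhammer ℝ k).eval (1 / 2) = k.factorial * centralBinomRatio k := by
  induction k with
  | zero => simp [centralBinomRatio]
  | succ k ih =>
    rw [ascPochhammer_succ_eval, ih, Nat.factorial_succ]
    push_cast
    linear_combination (-(k.factorial : ℝ)) * succ_mul_centralBinomRatio_succ k

theorem multichoose_half (k : ℕ) : Ring.multichoose (1 / 2 : ℝ) k = centralBinomRatio k := by
  have h := Ring.factorial_nsmul_multichoose_eq_ascPochhammer (1 / 2 : ℝ) k
  rw [Polynomial.ascPochhammer_smeval_eq_eval, ascPochhammer_eval_half, nsmul_eq_mul] at h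
  exact mul_left_cancel₀ (by positivity) h

theorem hasSum_centralBinomRatio_mul_pow {x : ℝ} (hx : |x| < 1) :
    HasSum (fun k => centralBinomRatio k * x ^ k) (1 / √(1 - x)) := by
  have h := (one_div_one_sub_rpow_hasFPowerSeriesOnBall_zero (1 / 2)).hasSum
    (y := x) (by simpa [enorm_eq_nnnorm] using! hx)
  simpa only [zero_add, FormalMultilinearSeries.ofScalars_apply_eq, ← Ring.multichoose_eq,
    multichoose_half, smul_eq_mul, ← sqrt_eq_rpow] using h

theorem tsum_centralBinomRatio_eq_arcsin {x : ℝ} (hx : |x| < 1) :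
    ∑' k, centralBinomRatio k / (2 * k + 1) * x ^ (2 * k + 1) = arcsin x := by
  have hseries : ∀ y ∈ Metric.ball (0 : ℝ) 1, HasDerivAt
      (fun w => ∑' k, centralBinomRatio k / (2 * k + 1) * w ^ (2 * k + 1))
      (1 / √(1 - y ^ 2)) y := fun y hy => by
    have hy1 : ‖y‖ < 1 := mem_ball_zero_iff.1 hy
    have hcoeff : ∀ k : ℕ, (((2 * k : ℕ) : ℝ) + 1) * (centralBinomRatio k / (2 * k + 1))
        = centralBinomRatio k := fun k => by push_cast; field_simp
    have h := hasDerivAt_tsum_mul_pow_succ (e := (2 * ·)) (C := 1) (fun k => by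
      rw [hcoeff, norm_of_nonneg (centralBinomRatio_nonneg k)]
      exact centralBinomRatio_le_one k) (fun k => by lia) hy1
    simp only [hcoeff, pow_mul] at h
    rwa [(hasSum_centralBinomRatio_mul_pow (by simpa using hy1)).tsum_eq] at h
  have harcsin : ∀ y ∈ Metric.ball (0 : ℝ) 1, HasDerivAt arcsin (1 / √(1 - y ^ 2)) y :=
    fun y hy => by
      have hy1 := abs_lt.1 (mem_ball_zero_iff.1 hy)
      exact hasDerivAt_arcsin hy1.1.ne' hy1.2.ne
  exact Metric.isOpen_ball.eqOn_of_deriv_eq (convex_ball (0 : ℝ) 1).isPreconnected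
    (fun y hy => (hseries y hy).differentiableAt.differentiableWithinAt)
    (fun y hy => (harcsin y hy).differentiableAt.differentiableWithinAt)
    (fun y hy => (hseries y hy).deriv.trans (harcsin y hy).deriv.symm)
    (Metric.mem_ball_self one_pos) (by simp) (mem_ball_zero_iff.2 hx)

/-- The integral `F(x) = ∫₀ˣ arcsin u / u du`, given by its power series and hence meaningful only
for `|x| ≤ 1`. -/
noncomputable def arcsinIntegral (x : ℝ) : ℝ :=
  ∑' k : ℕ, centralBinomRatio k / (2 * k + 1) ^ 2 * x ^ (2 * k + 1)

theorem hasDerivAt_arcsinIntegral_tsum {x : ℝ} (hx : |x| < 1) :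
    HasDerivAt arcsinIntegral (∑' k : ℕ, centralBinomRatio k / (2 * k + 1) * x ^ (2 * k)) x := by
  have hcoeff : ∀ k : ℕ, (((2 * k : ℕ) : ℝ) + 1) * (centralBinomRatio k / (2 * k + 1) ^ 2)
      = centralBinomRatio k / (2 * k + 1) := fun k => by push_cast; field_simp
  have h := hasDerivAt_tsum_mul_pow_succ (e := (2 * ·)) (C := 1) (fun k => by
    rw [hcoeff, norm_of_nonneg (div_nonneg (centralBinomRatio_nonneg k) (by positivity))]
    exact div_le_one_of_le₀ ((centralBinomRatio_le_one k).trans (by simp)) (by positivity))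
    (fun k => by lia) hx
  simp only [hcoeff] at h
  exact h

theorem hasDerivAt_arcsinIntegral {x : ℝ} (hx : |x| < 1) (hx0 : x ≠ 0) :
    HasDerivAt arcsinIntegral (arcsin x / x) x := by
  convert! hasDerivAt_arcsinIntegral_tsum hx using 1
  rw [div_eq_iff hx0, ← tsum_mul_right, ← tsum_centralBinomRatio_eq_arcsin hx]
  simp only [pow_succ, mul_assoc]

theorem hasDerivAt_arcsinIntegral_sin {t : ℝ} (ht : t ∈ Set.Ioo 0 (π / 2)) :
    HasDerivAt (fun s => arcsinIntegral (sin s)) (t * cot t) t := by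
  have hsin : 0 < sin t := sin_pos_of_pos_of_lt_pi ht.1 (by linarith [ht.2, pi_pos])
  have hsin1 : sin t < 1 := by
    simpa using sin_lt_sin_of_lt_of_le_pi_div_two (by linarith [ht.1, pi_pos]) le_rfl ht.2
  convert! (hasDerivAt_arcsinIntegral (by rwa [abs_of_pos hsin]) hsin.ne').comp t
    (hasDerivAt_sin t) using 1
  rw [arcsin_sin (by linarith [ht.1, pi_pos]) ht.2.le, cot_eq_cos_div_sin]
  ring

/-- The dilogarithm `Li₂`, given by its power series and hence meaningful only for `‖z‖ ≤ 1`. -/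
noncomputable def dilog (z : ℂ) : ℂ := ∑' n : ℕ, z ^ (n + 1) / ((n : ℂ) + 1) ^ 2

/-- The Clausen function `Cl₂`, with the summation index shifted to start at `0`. -/
noncomputable def clausen (θ : ℝ) : ℝ := ∑' n : ℕ, sin (((n : ℝ) + 1) * θ) / ((n : ℝ) + 1) ^ 2

theorem summable_one_div_succ_sq : Summable fun n : ℕ => 1 / ((n : ℝ) + 1) ^ 2 := by
  simpa using (summable_nat_add_iff 1).2 (summable_one_div_nat_pow.2 one_lt_two)

theorem norm_dilog_term_le {z : ℂ} (hz : ‖z‖ ≤ 1) (n : ℕ) :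
    ‖z ^ (n + 1) / ((n : ℂ) + 1) ^ 2‖ ≤ 1 / ((n : ℝ) + 1) ^ 2 := by
  rw [norm_div, norm_pow, norm_pow, ← Nat.cast_succ, Complex.norm_natCast, Nat.cast_succ]
  gcongr
  exact pow_le_one₀ (norm_nonneg z) hz

theorem continuousOn_dilog : ContinuousOn dilog (Metric.closedBall 0 1) :=
  continuousOn_tsum (fun n => by fun_prop) summable_one_div_succ_sq
    fun n _ hz => norm_dilog_term_le (mem_closedBall_zero_iff.1 hz) n

theorem hasDerivAt_dilog {z : ℂ} (hz : ‖z‖ < 1) (hz0 : z ≠ 0) :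
    HasDerivAt dilog (-Complex.log (1 - z) / z) z := by
  have hcoeff : ∀ n : ℕ, ((n : ℂ) + 1) * (((n : ℂ) + 1) ^ 2)⁻¹ = ((n : ℂ) + 1)⁻¹ := fun n => by
    have : (n : ℂ) + 1 ≠ 0 := Nat.cast_add_one_ne_zero n
    field_simp
  have h := hasDerivAt_tsum_mul_pow_succ (e := id) (C := 1) (fun n => by
    rw [id, hcoeff, norm_inv, ← Nat.cast_succ, Complex.norm_natCast]
    exact Nat.cast_inv_le_one _) (fun n => le_rfl) hz
  convert! h using 1
  · funext w
    simp only [dilog, id, div_eq_inv_mul]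
  · rw [div_eq_iff hz0, ← tsum_mul_right, ← (Complex.hasSum_taylorSeries_neg_log' hz).tsum_eq]
    refine tsum_congr fun n => ?_
    rw [id, hcoeff, pow_succ]
    ring

theorem im_dilog_exp_mul_I (θ : ℝ) : (dilog (Complex.exp (θ * Complex.I))).im = clausen θ := by
  have hsum : Summable fun n : ℕ => Complex.exp (θ * Complex.I) ^ (n + 1) / ((n : ℂ) + 1) ^ 2 :=
    .of_norm_bounded summable_one_div_succ_sq
      (norm_dilog_term_le (Complex.norm_exp_ofReal_mul_I θ).le)
  rw [dilog, Complex.im_tsum hsum, clausen]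
  refine tsum_congr fun n => ?_
  have hpow : Complex.exp (θ * Complex.I) ^ (n + 1)
      = Complex.exp ((((n : ℝ) + 1) * θ : ℝ) * Complex.I) := by
    rw [← Complex.exp_nat_mul]
    push_cast
    ring_nf
  have hden : ((n : ℂ) + 1) ^ 2 = ((((n : ℝ) + 1) ^ 2 : ℝ) : ℂ) := by push_cast; rfl
  rw [hpow, hden, Complex.div_ofReal_im, Complex.exp_ofReal_mul_I_im]

theorem exp_neg_two_mul_mul_I (z : ℂ) :
    Complex.exp (-(2 * z * Complex.I)) = (Complex.cos z - Complex.sin z * Complex.I) ^ 2 :=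
  calc Complex.exp (-(2 * z * Complex.I)) = Complex.exp (-z * Complex.I) ^ 2 := by
        rw [← Complex.exp_nat_mul]
        push_cast
        ring_nf
    _ = (Complex.cos z - Complex.sin z * Complex.I) ^ 2 := by
        rw [Complex.exp_mul_I, Complex.cos_neg, Complex.sin_neg, neg_mul, sub_eq_add_neg]

theorem one_sub_exp_neg_two_mul_mul_I (z : ℂ) :
    1 - Complex.exp (-(2 * z * Complex.I))
      = 2 * Complex.I * Complex.sin z * (Complex.cos z - Complex.sin z * Complex.I) := by
  rw [exp_neg_two_mul_mul_I]
  linear_combination -Complex.sin_sq_add_cos_sq z + Complex.sin z ^ 2 * Complex.I_sq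

theorem norm_one_sub_exp_neg_two_mul_mul_I (t : ℝ) :
    ‖1 - Complex.exp (-(2 * t * Complex.I))‖ = 2 * |sin t| := by
  have hexp : Complex.exp (-(2 * t * Complex.I)) = Complex.exp (Complex.I * (-(2 * t) : ℝ)) := by
    push_cast
    ring_nf
  have hhalf : -(2 * t) / 2 = -t := by ring
  rw [norm_sub_rev, hexp, Complex.norm_exp_I_mul_ofReal_sub_one, hhalf, sin_neg, norm_mul,
    norm_neg, norm_ofNat, norm_eq_abs]

theorem hasDerivAt_one_sub_exp_neg_two_mul_mul_I (t : ℝ) :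
    HasDerivAt (fun s : ℝ => 1 - Complex.exp (-(2 * s * Complex.I)))
      (2 * Complex.I * Complex.exp (-(2 * t * Complex.I))) t := by
  have hexponent : HasDerivAt (fun s : ℂ => -(2 * s * Complex.I)) (-(2 * 1 * Complex.I)) t :=
    (((hasDerivAt_id (t : ℂ)).const_mul 2).mul_const Complex.I).neg
  convert! (hexponent.cexp.const_sub 1).comp_ofReal using 1
  ring

theorem log_exp_neg_two_mul_mul_I {t : ℝ} (ht : t ∈ Set.Ico (-(π / 2)) (π / 2)) :
    Complex.log (Complex.exp (-(2 * t * Complex.I))) = -(2 * t * Complex.I) := by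
  have him : (-(2 * t * Complex.I)).im = -(2 * t) := by simp
  apply Complex.log_exp <;> rw [him] <;> linarith [ht.1, ht.2]

theorem hasDerivAt_dilog_one_sub_exp {t : ℝ} (ht : t ∈ Set.Ioo 0 (π / 6)) :
    HasDerivAt (fun s : ℝ => dilog (1 - Complex.exp (-(2 * s * Complex.I))))
      (2 * t + 2 * Complex.I * (t * cot t : ℝ)) t := by
  have hsin : 0 < sin t := sin_pos_of_pos_of_lt_pi ht.1 (by linarith [ht.2, pi_pos])
  have hnorm : ‖1 - Complex.exp (-(2 * t * Complex.I))‖ < 1 := by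
    have hhalf : sin t < 1 / 2 := sin_pi_div_six ▸
      sin_lt_sin_of_lt_of_le_pi_div_two (by linarith [ht.1, pi_pos]) (by linarith [pi_pos]) ht.2
    rw [norm_one_sub_exp_neg_two_mul_mul_I, abs_of_pos hsin]
    linarith
  have hne : 1 - Complex.exp (-(2 * t * Complex.I)) ≠ 0 := by
    rw [← norm_pos_iff, norm_one_sub_exp_neg_two_mul_mul_I]
    positivity
  convert! (hasDerivAt_dilog hnorm hne).comp t (hasDerivAt_one_sub_exp_neg_two_mul_mul_I t) using 1
  rw [sub_sub_cancel,
    log_exp_neg_two_mul_mul_I ⟨by linarith [ht.1, pi_pos], by linarith [ht.2, pi_pos]⟩, neg_neg,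
    div_mul_eq_mul_div, eq_div_iff hne, one_sub_exp_neg_two_mul_mul_I, exp_neg_two_mul_mul_I]
  have hsin0 : Complex.sin t ≠ 0 := by exact_mod_cast hsin.ne'
  rw [cot_eq_cos_div_sin]
  push_cast
  field_simp
  linear_combination
    (t * Complex.sin t * (Complex.cos t - Complex.sin t * Complex.I)) * Complex.I_sq

theorem dilog_one_sub_exp {t : ℝ} (ht : t ∈ Set.Icc 0 (π / 6)) :
    dilog (1 - Complex.exp (-(2 * t * Complex.I)))
      = t ^ 2 + 2 * Complex.I * arcsinIntegral (sin t) := by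
  have hsin : ∀ s ∈ Set.Icc 0 t, 2 * |sin s| ≤ 1 := fun s hs => by
    have hhalf : sin s ≤ 1 / 2 := sin_pi_div_six ▸
      sin_le_sin_of_le_of_le_pi_div_two (by linarith [hs.1, pi_pos]) (by linarith [pi_pos])
        (hs.2.trans ht.2)
    rw [abs_of_nonneg (sin_nonneg_of_nonneg_of_le_pi hs.1 (by linarith [hs.2, ht.2, pi_pos]))]
    linarith
  refine eq_of_hasDerivAt_eq_Ioo ht.1
    (f := fun s : ℝ => dilog (1 - Complex.exp (-(2 * s * Complex.I))))
    (g := fun s : ℝ => (s : ℂ) ^ 2 + 2 * Complex.I * arcsinIntegral (sin s))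
    (continuousOn_dilog.comp (by fun_prop) fun s hs => ?_) (fun s hs => ?_)
    (fun s hs => hasDerivAt_dilog_one_sub_exp ⟨hs.1, hs.2.trans_le ht.2⟩) (fun s hs => ?_) ?_
  · rw [mem_closedBall_zero_iff, norm_one_sub_exp_neg_two_mul_mul_I]
    exact hsin s hs
  · have hcont : ContinuousAt arcsinIntegral (sin s) :=
      (hasDerivAt_arcsinIntegral_tsum (by linarith [hsin s hs, abs_nonneg (sin s)])).continuousAt
    have hcomp := hcont.comp continuous_sin.continuousAt
    refine ContinuousAt.continuousWithinAt ?_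
    fun_prop
  · have hsq : HasDerivAt (fun s : ℝ => (s : ℂ) ^ 2) (2 * s) s := by
      simpa using (hasDerivAt_pow 2 (s : ℂ)).comp_ofReal
    exact hsq.add ((hasDerivAt_arcsinIntegral_sin
      ⟨hs.1, by linarith [hs.2, ht.2, pi_pos]⟩).ofReal_comp.const_mul (2 * Complex.I))
  · simp [dilog, arcsinIntegral]

theorem one_sub_exp_neg_pi_div_three :
    1 - Complex.exp (-(2 * (π / 6 : ℝ) * Complex.I)) = Complex.exp ((π / 3 : ℝ) * Complex.I) := by
  have hangle : -(2 * ((π / 6 : ℝ) : ℂ) * Complex.I) = (-(π / 3) : ℝ) * Complex.I := by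
    push_cast
    ring
  rw [hangle]
  apply Complex.ext
  · rw [Complex.sub_re, Complex.exp_ofReal_mul_I_re, Complex.exp_ofReal_mul_I_re, cos_neg,
      cos_pi_div_three, Complex.one_re]
    norm_num
  · rw [Complex.sub_im, Complex.exp_ofReal_mul_I_im, Complex.exp_ofReal_mul_I_im, sin_neg,
      Complex.one_im, zero_sub, neg_neg]

theorem clausen_pi_div_three : clausen (π / 3) = 2 * arcsinIntegral (1 / 2) := by
  have hπ : π / 6 ∈ Set.Icc 0 (π / 6) := Set.right_mem_Icc.2 (by positivity)
  have h := congrArg Complex.im (dilog_one_sub_exp hπ)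
  rw [one_sub_exp_neg_pi_div_three, im_dilog_exp_mul_I, sin_pi_div_six] at h
  rw [h, ← Complex.ofReal_pow, Complex.add_im, Complex.ofReal_im, Complex.im_mul_ofReal]
  simp

theorem two_mul_arcsinIntegral_half :
    2 * arcsinIntegral (1 / 2) = ∑' k : ℕ, (k.centralBinom : ℝ) / (16 ^ k * (2 * k + 1) ^ 2) := by
  rw [arcsinIntegral, ← tsum_mul_left]
  refine tsum_congr fun k => ?_
  have hpow : (16 : ℝ) ^ k = 4 ^ k * 2 ^ (2 * k) := by
    rw [pow_mul, ← mul_pow]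
    norm_num
  rw [centralBinomRatio, hpow, one_div_pow, pow_succ]
  field_simp
  ring

/-- `∑_{k≥0} C(2k,k)/(16^k·(2k+1)²) = Cl₂(π/3) = ∑_{n≥1} sin(nπ/3)/n²`. -/
theorem central_binom_sum_eq_clausen :
    (∑' k : ℕ, ((2 * k).choose k : ℝ) / (16^k * (2 * (k : ℝ) + 1)^2))
      = ∑' n : ℕ, Real.sin (((n : ℝ) + 1) * π / 3) / ((n : ℝ) + 1)^2 := by
  calc _ = 2 * arcsinIntegral (1 / 2) := by
        simp only [two_mul_arcsinIntegral_half, Nat.centralBinom_eq_two_mul_choose]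
    _ = clausen (π / 3) := clausen_pi_div_three.symm
    _ = _ := by simp only [clausen, mul_div_assoc]
end

section
/- The identity (3√π/8)·∑_{n≥0} n!·ψ(n+1)/Γ(n+3/2) · 4^{−n} + (π√3/6)·(γ + ln 3) = (2/√3)·Cl₂(π/3) holds, where ψ(n+1) = Hₙ − γ with Hₙ the n-th harmonic number and γ the Euler–Mascheroni constant, Γ is the Euler gamma function, and Cl₂(π/3) = ∑_{n≥1} sin(nπ/3)/n². Concretely: (3√π/8)·∑_{n≥0} n!·(Hₙ − γ)/Γ(n+3/2) · 4^{−n} + (π√3/6)·(γ + ln 3) = (2/√3)·∑_{n≥1} sin(nπ/3)/n². -/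
open Real

/-- The `n`-th harmonic number `Hₙ = ∑_{k=1}^n 1/k`, with `H₀ = 0`. -/
noncomputable def harmonicNum (n : ℕ) : ℝ := ∑ k ∈ Finset.range n, 1 / ((k : ℝ) + 1)

/-!
Since `n! √π / Γ(n + 3/2) = ∫_{-1}^1 (1 - u²)ⁿ du`, a series `∑ n! √π / Γ(n + 3/2) aₙ xⁿ` is the
integral over `[-1, 1]` of the generating function of `aₙ` at `x (1 - u²)`. For `x = sin² θ` the
substitution `u = tan t / tan θ` turns `1 - x (1 - u²)` into `(cos θ / cos t)²`, so the generating
functions `1 / (1 - y)` of `1` and `-log (1 - y) / (1 - y)` of `Hₙ` lead to integrals over `[-θ, θ]`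
of a constant and of `log (2 cos t)`. The latter is `Cl₂(π - 2θ)`, by Abel summation of
`log |1 - e^{ix}| = -∑ cos (n x) / n`. At `θ = π/6` the duplication formula for `Cl₂` gives
`Cl₂(2π/3) = (2/3) Cl₂(π/3)`.
-/

open Filter MeasureTheory Set Topology
open scoped Interval Nat

/-! ### Series with coefficients `n! / Γ(n + 3/2)` -/

theorem two_mul_prod_div_eq_factorial_mul_sqrt_pi_div_Gamma (n : ℕ) :
    2 * ∏ i ∈ Finset.range n, ((2 : ℝ) * i + 2) / (2 * i + 3) = n ! * √π / Gamma (n + 3 / 2) := by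
  induction n with
  | zero =>
    have Gamma_three_halves : Gamma (3 / 2) = 1 / 2 * √π := by
      rw [← Gamma_one_half_eq, ← Gamma_add_one (by norm_num)]
      norm_num
    rw [Finset.prod_range_zero, Nat.factorial_zero, Nat.cast_zero, zero_add, Gamma_three_halves]
    field_simp
    norm_num
  | succ n ih =>
    have Gamma_succ : Gamma ((n + 1 : ℕ) + 3 / 2) = (n + 3 / 2) * Gamma (n + 3 / 2) := by
      rw [← Gamma_add_one (by positivity)]
      push_cast
      ring_nf
    rw [Finset.prod_range_succ, ← mul_assoc, ih, Gamma_succ, Nat.factorial_succ]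
    push_cast
    field_simp

theorem integral_one_sub_sq_pow (n : ℕ) :
    ∫ u in (-1 : ℝ)..1, (1 - u ^ 2) ^ n = n ! * √π / Gamma (n + 3 / 2) :=
  calc ∫ u in (-1 : ℝ)..1, (1 - u ^ 2) ^ n
      = ∫ x in 0..π, sin x ^ (2 * n + 1) := by
        simpa using (integral_sin_pow_odd_mul_cos_pow (a := 0) (b := π) n 0).symm
    _ = 2 * ∏ i ∈ Finset.range n, ((2 : ℝ) * i + 2) / (2 * i + 3) := integral_sin_pow_odd n
    _ = n ! * √π / Gamma (n + 3 / 2) := two_mul_prod_div_eq_factorial_mul_sqrt_pi_div_Gamma n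

theorem hasSum_integral_comp_mul_one_sub_sq {a : ℕ → ℝ} {f : ℝ → ℝ} {x : ℝ} (hx : 0 ≤ x)
    (hf : ∀ y ∈ Icc 0 x, HasSum (fun n => a n * y ^ n) (f y)) :
    HasSum (fun n : ℕ => n ! * √π / Gamma (n + 3 / 2) * (a n * x ^ n))
      (∫ u in (-1 : ℝ)..1, f (x * (1 - u ^ 2))) := by
  have one_sub_sq_mem {u : ℝ} (hu : u ∈ Ι (-1) 1) : 1 - u ^ 2 ∈ Icc 0 1 := by
    rw [uIoc_of_le (by norm_num)] at hu
    constructor <;> nlinarith [hu.1, hu.2]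
  have hsum := intervalIntegral.hasSum_integral_of_dominated_convergence (μ := volume)
    (a := -1) (b := 1) (F := fun n u => a n * (x * (1 - u ^ 2)) ^ n)
    (f := fun u => f (x * (1 - u ^ 2)))
    (bound := fun n _ => ‖a n * x ^ n‖)
    (fun n => (by fun_prop : Continuous _).aestronglyMeasurable)
    (fun n => .of_forall fun u hu => ?_)
    (.of_forall fun _ _ => (hf x (right_mem_Icc.2 hx)).summable.norm)
    intervalIntegrable_const
    (.of_forall fun u hu => ?_)
  · refine hsum.congr_fun fun n => ?_
    simp_rw [mul_pow, ← mul_assoc]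
    rw [intervalIntegral.integral_const_mul, integral_one_sub_sq_pow]
    ring
  · have ⟨h0, h1⟩ := one_sub_sq_mem hu
    rw [mul_pow, ← mul_assoc, norm_mul, norm_pow, norm_of_nonneg h0]
    exact mul_le_of_le_one_right (norm_nonneg _) (pow_le_one₀ h0 h1)
  · have ⟨h0, h1⟩ := one_sub_sq_mem hu
    exact hf _ ⟨by positivity, mul_le_of_le_one_right hx h1⟩

theorem cos_pos_of_mem_uIcc_neg_self {θ t : ℝ} (hθ : θ ∈ Ioo (-(π / 2)) (π / 2))
    (ht : t ∈ [[-θ, θ]]) : 0 < cos t :=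
  cos_pos_of_mem_Ioo
    (ordConnected_Ioo.uIcc_subset ⟨neg_lt_neg hθ.2, neg_lt.mpr hθ.1⟩ hθ ht)

theorem integral_comp_one_sub_sin_sq_div {θ : ℝ} (hθ : θ ∈ Ioo 0 (π / 2)) (g : ℝ → ℝ) :
    ∫ u in (-1 : ℝ)..1, g (1 - sin θ ^ 2 * (1 - u ^ 2)) / (1 - sin θ ^ 2 * (1 - u ^ 2))
      = (∫ t in -θ..θ, g ((cos θ / cos t) ^ 2)) / (sin θ * cos θ) := by
  have cos_pos {t : ℝ} (ht : t ∈ [[-θ, θ]]) : 0 < cos t :=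
    cos_pos_of_mem_uIcc_neg_self (Ioo_subset_Ioo_left (by linarith [pi_pos]) hθ) ht
  have hsin : 0 < sin θ := sin_pos_of_pos_of_lt_pi hθ.1 (by linarith [hθ.1, hθ.2])
  have hcos : 0 < cos θ := cos_pos right_mem_uIcc
  have htan : 0 < tan θ := tan_pos_of_pos_of_lt_pi_div_two hθ.1 hθ.2
  have deriv_tan {t : ℝ} (ht : t ∈ [[-θ, θ]]) :
      HasDerivAt (fun t => tan t / tan θ) (1 / cos t ^ 2 / tan θ) t :=
    (hasDerivAt_tan (cos_pos ht).ne').div_const _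
  have subst := intervalIntegral.integral_comp_mul_deriv_of_deriv_nonneg
    (g := fun u => g (1 - sin θ ^ 2 * (1 - u ^ 2)) / (1 - sin θ ^ 2 * (1 - u ^ 2)))
    (fun t ht => (deriv_tan ht).continuousAt.continuousWithinAt)
    (fun t ht => deriv_tan (Ioo_subset_Icc_self ht))
    (fun t _ => by positivity)
  rw [tan_neg, neg_div, div_self htan.ne'] at subst
  rw [← subst, ← intervalIntegral.integral_div]
  refine intervalIntegral.integral_congr fun t ht => ?_
  have hcost := cos_pos ht
  have one_sub_eq : 1 - sin θ ^ 2 * (1 - (tan t / tan θ) ^ 2) = (cos θ / cos t) ^ 2 := by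
    rw [tan_eq_sin_div_cos, tan_eq_sin_div_cos]
    field_simp
    rw [sin_sq θ, sin_sq t]
    ring
  simp only [Function.comp_apply, one_sub_eq]
  rw [tan_eq_sin_div_cos]
  field_simp

theorem hasSum_mul_sin_sq_pow_of_hasSum_div_one_sub {θ : ℝ} (hθ : θ ∈ Ioo 0 (π / 2))
    {a : ℕ → ℝ} {g : ℝ → ℝ}
    (hg : ∀ y : ℝ, |y| < 1 → HasSum (fun n => a n * y ^ n) (g (1 - y) / (1 - y))) :
    HasSum (fun n : ℕ => n ! * √π / Gamma (n + 3 / 2) * (a n * (sin θ ^ 2) ^ n))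
      ((∫ t in -θ..θ, g ((cos θ / cos t) ^ 2)) / (sin θ * cos θ)) := by
  rw [← integral_comp_one_sub_sin_sq_div hθ]
  refine hasSum_integral_comp_mul_one_sub_sq (f := fun y => g (1 - y) / (1 - y))
    (sq_nonneg _) fun y hy => hg y ?_
  have hcos : 0 < cos θ := cos_pos_of_mem_Ioo (Ioo_subset_Ioo_left (by linarith [pi_pos]) hθ)
  rw [abs_of_nonneg hy.1]
  nlinarith [hy.2, sin_sq_add_cos_sq θ]

theorem hasSum_factorial_div_Gamma_mul_sin_sq_pow {θ : ℝ} (hθ : θ ∈ Ioo 0 (π / 2)) :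
    HasSum (fun n : ℕ => n ! * √π / Gamma (n + 3 / 2) * (sin θ ^ 2) ^ n)
      (2 * θ / (sin θ * cos θ)) := by
  have hsum := hasSum_mul_sin_sq_pow_of_hasSum_div_one_sub hθ (a := 1) (g := 1) fun y hy => by
    simpa using hasSum_geometric_of_abs_lt_one hy
  simpa [two_mul] using hsum

/-! ### The Clausen function -/

/-- The Clausen function `Cl₂ θ = ∑_{n ≥ 1} sin (n θ) / n²`; the sum may start at `n = 0` because
that term is `0 / 0 = 0`. -/
noncomputable def clausenTwo (θ : ℝ) : ℝ := ∑' n : ℕ, sin (n * θ) / (n : ℝ) ^ 2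

theorem summable_sin_div_sq (θ : ℝ) : Summable fun n : ℕ => sin (n * θ) / (n : ℝ) ^ 2 :=
  .of_norm_bounded (Real.summable_one_div_nat_pow.mpr one_lt_two) fun n => by
    rw [norm_div, norm_pow, norm_natCast]
    gcongr
    exact abs_sin_le_one _

theorem clausenTwo_eq_tsum_succ (θ : ℝ) :
    clausenTwo θ = ∑' n : ℕ, sin ((n + 1) * θ) / ((n : ℝ) + 1) ^ 2 := by
  simpa [clausenTwo] using (summable_sin_div_sq θ).tsum_eq_zero_add

theorem clausenTwo_two_pi_sub (θ : ℝ) : clausenTwo (2 * π - θ) = -clausenTwo θ := by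
  rw [clausenTwo, clausenTwo, ← tsum_neg]
  refine tsum_congr fun n => ?_
  rw [mul_sub, sin_nat_mul_two_pi_sub, neg_div]

theorem clausenTwo_two_mul (θ : ℝ) :
    clausenTwo (2 * θ) = 2 * (clausenTwo θ - clausenTwo (π - θ)) := by
  have sub_term (n : ℕ) : (1 + (-1) ^ n) * (sin (n * θ) / (n : ℝ) ^ 2)
      = sin (n * θ) / (n : ℝ) ^ 2 - sin (n * (π - θ)) / (n : ℝ) ^ 2 := by
    rw [mul_sub, sin_nat_mul_pi_sub]
    ring
  have even_term (k : ℕ) : (1 + (-1) ^ (2 * k)) * (sin ((2 * k : ℕ) * θ) / ((2 * k : ℕ) : ℝ) ^ 2)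
      = sin (k * (2 * θ)) / (k : ℝ) ^ 2 / 2 := by
    rw [pow_mul]
    push_cast
    ring_nf
  have odd_term (k : ℕ) : (1 + (-1) ^ (2 * k + 1)) *
      (sin ((2 * k + 1 : ℕ) * θ) / ((2 * k + 1 : ℕ) : ℝ) ^ 2) = 0 := by
    simp [pow_succ, pow_mul]
  have hsum := (summable_sin_div_sq θ).hasSum.sub (summable_sin_div_sq (π - θ)).hasSum
  have hsum_even_odd := HasSum.even_add_odd
    (f := fun n : ℕ => (1 + (-1) ^ n) * (sin (n * θ) / (n : ℝ) ^ 2))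
    (((summable_sin_div_sq (2 * θ)).hasSum.div_const 2).congr_fun even_term)
    (hasSum_zero.congr_fun odd_term)
  have := hsum_even_odd.unique (hsum.congr_fun sub_term)
  unfold clausenTwo
  linarith

theorem clausenTwo_two_pi_div_three : clausenTwo (2 * π / 3) = 2 / 3 * clausenTwo (π / 3) := by
  have h := clausenTwo_two_mul (π / 3)
  rw [show π - π / 3 = 2 * π / 3 by ring, ← mul_div_assoc] at h
  linarith

theorem hasSum_pow_div_mul_cos {r : ℝ} (hr : |r| < 1) (x : ℝ) :
    HasSum (fun n : ℕ => r ^ n / n * cos (n * x))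
      (-log ‖1 - r * Complex.exp (x * Complex.I)‖) := by
  have norm_lt : ‖r * Complex.exp (x * Complex.I)‖ < 1 := by simpa using hr
  have h := Complex.hasSum_re (Complex.hasSum_taylorSeries_neg_log norm_lt)
  rw [Complex.neg_re, Complex.log_re] at h
  refine h.congr_fun fun n => ?_
  have polar : (r * Complex.exp (x * Complex.I)) ^ n / n
      = ((r ^ n / n : ℝ) : ℂ) * Complex.exp ((n * x : ℝ) * Complex.I) := by
    rw [mul_pow, ← Complex.exp_nat_mul]
    push_cast
    ring_nf
  rw [polar, Complex.re_ofReal_mul, Complex.exp_ofReal_mul_I_re]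

theorem integral_cos_nat_mul_div (n : ℕ) (a b : ℝ) :
    ∫ x in a..b, cos (n * x) / n = (sin (n * b) - sin (n * a)) / (n : ℝ) ^ 2 := by
  rcases eq_or_ne n 0 with rfl | hn
  · simp
  · rw [intervalIntegral.integral_div, intervalIntegral.integral_comp_mul_left _ (by positivity),
      integral_cos, smul_eq_mul]
    field_simp

theorem hasSum_integral_log_norm_one_sub {r : ℝ} (hr : |r| < 1) (a b : ℝ) :
    HasSum (fun n : ℕ => (sin (n * a) - sin (n * b)) / (n : ℝ) ^ 2 * r ^ n)
      (∫ x in a..b, log ‖1 - r * Complex.exp (x * Complex.I)‖) := by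
  rw [intervalIntegral.integral_symm, ← intervalIntegral.integral_neg]
  have hsum := intervalIntegral.hasSum_integral_of_dominated_convergence (μ := volume)
    (a := b) (b := a) (F := fun (n : ℕ) x => r ^ n / n * cos (n * x))
    (bound := fun n _ => |r| ^ n)
    (fun n => (by fun_prop : Continuous _).aestronglyMeasurable)
    (fun n => .of_forall fun x _ => ?_)
    (.of_forall fun _ _ => summable_geometric_of_lt_one (abs_nonneg r) hr)
    intervalIntegrable_const
    (.of_forall fun x _ => hasSum_pow_div_mul_cos hr x)
  · refine hsum.congr_fun fun n => ?_
    rw [← integral_cos_nat_mul_div, mul_comm, ← intervalIntegral.integral_const_mul]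
    simp only [div_mul_eq_mul_div, mul_div_assoc]
  · rw [norm_mul, norm_div, norm_pow, norm_natCast, norm_eq_abs, norm_eq_abs]
    calc |r| ^ n / n * |cos (n * x)| ≤ |r| ^ n / n :=
          mul_le_of_le_one_right (by positivity) (abs_cos_le_one _)
      _ ≤ |r| ^ n := div_nat_le_self_of_nonnneg (by positivity) n

theorem abs_sin_le_norm_one_sub (r x : ℝ) : |sin x| ≤ ‖1 - r * Complex.exp (x * Complex.I)‖ := by
  have rotate : Complex.exp ((-x : ℝ) * Complex.I) * (1 - r * Complex.exp (x * Complex.I))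
      = Complex.exp ((-x : ℝ) * Complex.I) - r := by
    rw [mul_sub, mul_one, mul_left_comm, ← Complex.exp_add]
    simp
  calc |sin x| = |(Complex.exp ((-x : ℝ) * Complex.I) - r).im| := by
        rw [Complex.sub_im, Complex.exp_ofReal_mul_I_im, Complex.ofReal_im, sub_zero, sin_neg,
          abs_neg]
    _ ≤ ‖Complex.exp ((-x : ℝ) * Complex.I) - r‖ := Complex.abs_im_le_norm _
    _ = ‖1 - r * Complex.exp (x * Complex.I)‖ := by
        rw [← rotate, norm_mul, Complex.norm_exp_ofReal_mul_I, one_mul]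

theorem abs_log_norm_one_sub_le {r x : ℝ} (hr : |r| ≤ 1) (hx : sin x ≠ 0) :
    |log ‖1 - r * Complex.exp (x * Complex.I)‖| ≤ log 2 + |log (sin x)| := by
  have lower := abs_sin_le_norm_one_sub r x
  have upper : ‖1 - r * Complex.exp (x * Complex.I)‖ ≤ 2 := by
    refine (norm_sub_le _ _).trans ?_
    rw [norm_one, norm_mul, Complex.norm_exp_ofReal_mul_I, Complex.norm_real, norm_eq_abs]
    linarith
  have log_lower := log_le_log (abs_pos.mpr hx) lower
  have log_upper := log_le_log ((abs_pos.mpr hx).trans_le lower) upper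
  rw [log_abs] at log_lower
  rw [abs_le]
  constructor <;> linarith [neg_abs_le (log (sin x)), abs_nonneg (log (sin x)),
    log_nonneg one_le_two]

theorem log_norm_one_sub_exp_mul_I (x : ℝ) :
    log ‖1 - Complex.exp (x * Complex.I)‖ = log (2 * sin (x / 2)) := by
  rw [norm_sub_rev, mul_comm, Complex.norm_exp_I_mul_ofReal_sub_one, norm_eq_abs, log_abs]

theorem ae_sin_ne_zero : ∀ᵐ x : ℝ, sin x ≠ 0 := by
  filter_upwards [(countable_range fun n : ℤ => n * π).ae_notMem volume] with x hx
  exact mt sin_eq_zero_iff.mp hx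

theorem tendsto_integral_log_norm_one_sub (a b : ℝ) :
    Tendsto (fun r : ℝ => ∫ x in a..b, log ‖1 - r * Complex.exp (x * Complex.I)‖)
      (𝓝[<] 1) (𝓝 (∫ x in a..b, log (2 * sin (x / 2)))) := by
  refine intervalIntegral.tendsto_integral_filter_of_dominated_convergence
    (fun x => log 2 + |log (sin x)|) ?_ ?_ ?_ ?_
  · exact .of_forall fun r => (by fun_prop : Measurable _).aestronglyMeasurable
  · filter_upwards [Ioo_mem_nhdsLT (show (-1 : ℝ) < 1 by norm_num)] with r hr
    filter_upwards [ae_sin_ne_zero] with x hx _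
    exact abs_log_norm_one_sub_le (abs_lt.mpr hr).le hx
  · exact intervalIntegrable_const.add intervalIntegrable_log_sin.abs
  · filter_upwards [ae_sin_ne_zero] with x hx _
    rw [← log_norm_one_sub_exp_mul_I]
    have norm_ne_zero : ‖1 - (1 : ℝ) * Complex.exp (x * Complex.I)‖ ≠ 0 :=
      ((abs_pos.mpr hx).trans_le (abs_sin_le_norm_one_sub 1 x)).ne'
    have continuousAt_one :
        ContinuousAt (fun r : ℝ => log ‖1 - r * Complex.exp (x * Complex.I)‖) 1 :=
      ContinuousAt.log (by fun_prop) norm_ne_zero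
    simpa using continuousAt_one.tendsto.mono_left nhdsWithin_le_nhds

theorem tendsto_integral_log_norm_one_sub_clausenTwo (a b : ℝ) :
    Tendsto (fun r : ℝ => ∫ x in a..b, log ‖1 - r * Complex.exp (x * Complex.I)‖)
      (𝓝[<] 1) (𝓝 (clausenTwo a - clausenTwo b)) := by
  have abel := Real.tendsto_tsum_powerSeries_nhdsWithin_lt
    ((summable_sin_div_sq a).hasSum.sub (summable_sin_div_sq b).hasSum).tendsto_sum_nat
  simp_rw [← sub_div] at abel
  refine abel.congr' ?_
  filter_upwards [Ioo_mem_nhdsLT (show (-1 : ℝ) < 1 by norm_num)] with r hr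
  exact (hasSum_integral_log_norm_one_sub (abs_lt.mpr hr) a b).tsum_eq

theorem integral_log_two_mul_sin_half (a b : ℝ) :
    ∫ x in a..b, log (2 * sin (x / 2)) = clausenTwo a - clausenTwo b :=
  tendsto_nhds_unique (tendsto_integral_log_norm_one_sub a b)
    (tendsto_integral_log_norm_one_sub_clausenTwo a b)

theorem integral_log_two_mul_cos (θ : ℝ) :
    ∫ t in -θ..θ, log (2 * cos t) = clausenTwo (π - 2 * θ) :=
  calc ∫ t in -θ..θ, log (2 * cos t)
      = ∫ t in -θ..θ, log (2 * sin ((π + 2 * t) / 2)) := by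
        simp only [add_div, mul_div_cancel_left₀ _ (two_ne_zero' ℝ), add_comm (π / 2),
          sin_add_pi_div_two]
    _ = (clausenTwo (π - 2 * θ) - clausenTwo (π + 2 * θ)) / 2 := by
        rw [intervalIntegral.integral_comp_add_mul (fun x => log (2 * sin (x / 2))) two_ne_zero,
          integral_log_two_mul_sin_half, smul_eq_mul, inv_mul_eq_div, mul_neg, ← sub_eq_add_neg]
    _ = clausenTwo (π - 2 * θ) := by
        rw [show π + 2 * θ = 2 * π - (π - 2 * θ) by ring, clausenTwo_two_pi_sub]
        ring

/-! ### The harmonic series -/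

theorem hasSum_harmonicNum_mul_pow {y : ℝ} (hy : |y| < 1) :
    HasSum (fun n => harmonicNum n * y ^ n) (-log (1 - y) / (1 - y)) := by
  have hlog := hasSum_pow_div_log_of_abs_lt_one hy
  have hgeom := hasSum_geometric_of_abs_lt_one hy
  have cauchy := hasSum_sum_range_mul_of_summable_norm hlog.summable.norm hgeom.summable.norm
  rw [hlog.tsum_eq, hgeom.tsum_eq, ← div_eq_mul_inv] at cauchy
  have coeff (n : ℕ) : ∑ k ∈ Finset.range (n + 1), y ^ (k + 1) / ((k : ℝ) + 1) * y ^ (n - k)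
      = harmonicNum (n + 1) * y ^ (n + 1) := by
    rw [harmonicNum, Finset.sum_mul]
    refine Finset.sum_congr rfl fun k hk => ?_
    rw [show n + 1 = k + 1 + (n - k) by grind, pow_add]
    ring
  simp only [coeff] at cauchy
  simpa [harmonicNum] using
    (hasSum_nat_add_iff (f := fun n => harmonicNum n * y ^ n) 1).mp cauchy

theorem hasSum_harmonicNum_mul_factorial_div_Gamma_mul_sin_sq_pow {θ : ℝ}
    (hθ : θ ∈ Ioo 0 (π / 2)) :
    HasSum (fun n : ℕ => n ! * √π / Gamma (n + 3 / 2) * (harmonicNum n * (sin θ ^ 2) ^ n))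
      ((2 * clausenTwo (π - 2 * θ) - 4 * θ * log (2 * cos θ)) / (sin θ * cos θ)) := by
  have cos_pos {t : ℝ} (ht : t ∈ [[-θ, θ]]) : 0 < cos t :=
    cos_pos_of_mem_uIcc_neg_self (Ioo_subset_Ioo_left (by linarith [pi_pos]) hθ) ht
  have integrable : IntervalIntegrable (fun t => log (2 * cos t)) volume (-θ) θ :=
    (ContinuousOn.log (by fun_prop) fun t ht =>
      (mul_pos two_pos (cos_pos ht)).ne').intervalIntegrable
  have log_split (t : ℝ) (ht : t ∈ [[-θ, θ]]) :
      -log ((cos θ / cos t) ^ 2) = 2 * log (2 * cos t) - 2 * log (2 * cos θ) := by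
    have hcosθ := (cos_pos right_mem_uIcc).ne'
    have hcost := (cos_pos ht).ne'
    rw [log_pow, log_div hcosθ hcost, log_mul two_ne_zero hcosθ, log_mul two_ne_zero hcost]
    push_cast
    ring
  convert hasSum_mul_sin_sq_pow_of_hasSum_div_one_sub hθ (g := fun s => -log s)
    fun y hy => hasSum_harmonicNum_mul_pow hy using 2
  rw [intervalIntegral.integral_congr log_split,
    intervalIntegral.integral_sub (integrable.const_mul 2) intervalIntegrable_const,
    intervalIntegral.integral_const_mul, integral_log_two_mul_cos, intervalIntegral.integral_const,
    smul_eq_mul]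
  ring

/-- `(3√π/8)·∑_{n≥0} n!·ψ(n+1)/Γ(n+3/2)·4^{−n} + (π√3/6)·(γ + ln 3) = (2/√3)·Cl₂(π/3)`,
where `ψ(n+1) = Hₙ − γ` and `Cl₂(π/3) = ∑_{n≥1} sin(nπ/3)/n²`. -/
theorem feynman_harmonic_identity :
    (3 * Real.sqrt π / 8) *
        (∑' n : ℕ, (n.factorial : ℝ) * (harmonicNum n - Real.eulerMascheroniConstant) /
          Real.Gamma ((n : ℝ) + 3/2) / 4^n)
      + (π * Real.sqrt 3 / 6) * (Real.eulerMascheroniConstant + Real.log 3)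
      = (2 / Real.sqrt 3) *
          (∑' n : ℕ, Real.sin (((n : ℝ) + 1) * π / 3) / ((n : ℝ) + 1)^2) := by
  have hθ : π / 6 ∈ Ioo 0 (π / 2) := by constructor <;> linarith [pi_pos]
  have hsum := (hasSum_harmonicNum_mul_factorial_div_Gamma_mul_sin_sq_pow hθ).sub
    ((hasSum_factorial_div_Gamma_mul_sin_sq_pow hθ).mul_left eulerMascheroniConstant)
  rw [sin_pi_div_six, cos_pi_div_six, mul_div_cancel₀ _ two_ne_zero, log_sqrt (by norm_num),
    show π - 2 * (π / 6) = 2 * π / 3 by ring, clausenTwo_two_pi_div_three] at hsum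
  have term (n : ℕ) : √π * (n ! * (harmonicNum n - eulerMascheroniConstant) /
        Gamma (n + 3 / 2) / 4 ^ n)
      = n ! * √π / Gamma (n + 3 / 2) * (harmonicNum n * ((1 / 2) ^ 2) ^ n) -
        eulerMascheroniConstant * (n ! * √π / Gamma (n + 3 / 2) * ((1 / 2) ^ 2) ^ n) := by
    rw [show ((1 / 2 : ℝ) ^ 2) ^ n = 1 / 4 ^ n by rw [← one_div_pow]; norm_num]
    ring
  have tsum_eq := (hsum.congr_fun term).tsum_eq
  rw [tsum_mul_left] at tsum_eq
  simp_rw [mul_div_assoc _ π 3]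
  rw [← clausenTwo_eq_tsum_succ, mul_div_right_comm, mul_assoc, tsum_eq]
  field_simp
  rw [sq_sqrt (by norm_num)]
  ring
end
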